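/- arXiv:0812.2740 — 2 statements merged into one kernel-verified Lean document; each statement's English description precedes it below -/
import Mathlib

section
/- Let d ∈ {1, 2} and let α ≥ 0 be real, with α ≤ 1 when d = 1 and α < 1 when d = 2. Then there exists a constant C > 0 such that for every sequence (λ_j)_{j ∈ ℕ} of nonnegative reals with ∑_j λ_j ≤ 1 and every sequence of measurable functions ψ_j : (ℝ^d)³ → ℂ, the following inequality of Lebesgue integrals in [0, ∞] holds: ∫_{ℝ^d × ℝ^d} ⟨p⟩^{2α} ⟨p′⟩^{2α} ( ∑_j λ_j ∫_{(ℝ^d)^4} |ψ_j(p − q + κ − r + s, q, r)| · |ψ_j(p′, κ, s)| dq dκ dr ds )² dp dp′ ≤ C ( ∑_j λ_j ∫_{(ℝ^d)³} ⟨p⟩² ⟨q⟩² ⟨r⟩² |ψ_j(p, q, r)|² dp dq dr )². -/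
open MeasureTheory

/-- The Japanese bracket `⟨x⟩ = (1 + ‖x‖²)^{1/2}` on `ℝ^d`. -/
noncomputable def jap {d : ℕ} (x : EuclideanSpace ℝ (Fin d)) : ℝ :=
  (1 + ‖x‖ ^ 2) ^ ((1 : ℝ) / 2)

open scoped ENNReal

/-- ENNReal power of the Japanese bracket. -/
noncomputable def JJ {d : ℕ} (b : ℝ) (x : EuclideanSpace ℝ (Fin d)) : ℝ≥0∞ :=
  ENNReal.ofReal (jap x ^ b)

lemma one_le_jap {d : ℕ} (x : EuclideanSpace ℝ (Fin d)) : 1 ≤ jap x :=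
  Real.one_le_rpow (by nlinarith [sq_nonneg ‖x‖]) (by norm_num)

lemma jap_pos {d : ℕ} (x : EuclideanSpace ℝ (Fin d)) : 0 < jap x :=
  lt_of_lt_of_le one_pos (one_le_jap x)

lemma jap_sq {d : ℕ} (x : EuclideanSpace ℝ (Fin d)) : jap x ^ 2 = 1 + ‖x‖ ^ 2 := by
  unfold jap
  rw [← Real.sqrt_eq_rpow, Real.sq_sqrt (by positivity)]

lemma jap_neg {d : ℕ} (x : EuclideanSpace ℝ (Fin d)) : jap (-x) = jap x := by
  simp [jap]

lemma jap_add_le {d : ℕ} (x y : EuclideanSpace ℝ (Fin d)) : jap (x + y) ≤ jap x + jap y := by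
  have hx := jap_sq x
  have hy := jap_sq y
  have hxy := jap_sq (x + y)
  have h := norm_add_le x y
  have hx1 : ‖x‖ ≤ jap x := abs_le_of_sq_le_sq' (by linarith) (jap_pos x).le |>.2
  have hy1 : ‖y‖ ≤ jap y := abs_le_of_sq_le_sq' (by linarith) (jap_pos y).le |>.2
  have h0 := norm_nonneg (x + y)
  have hm : ‖x‖ * ‖y‖ ≤ jap x * jap y := by
    gcongr
    exact (jap_pos x).le
  refine abs_le_of_sq_le_sq' ?_ (by linarith [jap_pos x, jap_pos y]) |>.2
  have : ‖x + y‖ ^ 2 ≤ (‖x‖ + ‖y‖) ^ 2 := by gcongr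
  nlinarith

lemma measurable_jap {d : ℕ} : Measurable (jap (d := d)) := by
  unfold jap
  fun_prop

@[fun_prop]
lemma measurable_JJ {d : ℕ} (b : ℝ) : Measurable (JJ (d := d) b) := by
  unfold JJ
  exact (measurable_jap.pow_const b).ennreal_ofReal

lemma JJ_mul {d : ℕ} (a b : ℝ) (x : EuclideanSpace ℝ (Fin d)) :
    JJ a x * JJ b x = JJ (a + b) x := by
  unfold JJ
  rw [← ENNReal.ofReal_mul (Real.rpow_nonneg (jap_pos x).le _), ← Real.rpow_add (jap_pos x)]

lemma JJ_zero {d : ℕ} (x : EuclideanSpace ℝ (Fin d)) : JJ 0 x = 1 := by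
  simp [JJ]

lemma JJ_mono {d : ℕ} {a b : ℝ} (h : a ≤ b) (x : EuclideanSpace ℝ (Fin d)) :
    JJ a x ≤ JJ b x :=
  ENNReal.ofReal_le_ofReal (Real.rpow_le_rpow_of_exponent_le (one_le_jap x) h)

lemma JJ_neg {d : ℕ} (a : ℝ) (x : EuclideanSpace ℝ (Fin d)) : JJ a (-x) = JJ a x := by
  simp [JJ, jap_neg]

lemma JJ_sq {d : ℕ} (a : ℝ) (x : EuclideanSpace ℝ (Fin d)) : JJ a x ^ 2 = JJ (2 * a) x := by
  rw [sq, JJ_mul, two_mul]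

lemma JJ_add_le {d : ℕ} {c : ℝ} (hc : 0 ≤ c) (x y : EuclideanSpace ℝ (Fin d)) :
    JJ c (x + y) ≤ ENNReal.ofReal (2 ^ c) * (JJ c x + JJ c y) := by
  unfold JJ
  have hx := jap_pos x
  have hy := jap_pos y
  rw [← ENNReal.ofReal_add (by positivity) (by positivity), ← ENNReal.ofReal_mul (by positivity)]
  apply ENNReal.ofReal_le_ofReal
  have h1 : jap (x + y) ^ c ≤ (2 * max (jap x) (jap y)) ^ c := by
    apply Real.rpow_le_rpow (jap_pos _).le _ hc
    linarith [jap_add_le x y, le_max_left (jap x) (jap y), le_max_right (jap x) (jap y)]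
  refine h1.trans ?_
  rw [Real.mul_rpow (by norm_num) (le_max_of_le_left hx.le)]
  gcongr
  rcases max_choice (jap x) (jap y) with h | h <;> rw [h]
  · linarith [Real.rpow_nonneg hy.le c]
  · linarith [Real.rpow_nonneg hx.le c]

lemma lintegral_JJ_lt_top {d : ℕ} {r : ℝ} (h : (d : ℝ) < r) :
    ∫⁻ x : EuclideanSpace ℝ (Fin d), JJ (-r) x < ∞ := by
  have hi := integrable_rpow_neg_one_add_norm_sq (E := EuclideanSpace ℝ (Fin d))
    (μ := volume) (r := r) (by simpa using h)
  have := hi.lintegral_lt_top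
  refine lt_of_le_of_lt (le_of_eq ?_) this
  apply lintegral_congr
  intro x
  unfold JJ jap
  rw [← Real.rpow_mul (by positivity)]
  congr 2
  ring

lemma JJ_mul_le {d : ℕ} {a b : ℝ} (ha : 0 ≤ a) (hb : 0 ≤ b) (x y : EuclideanSpace ℝ (Fin d)) :
    JJ (-a) x * JJ (-b) y ≤ JJ (-(a + b)) x + JJ (-(a + b)) y := by
  have key : ∀ (a b : ℝ) (_ : 0 ≤ b) (x y : EuclideanSpace ℝ (Fin d)), jap x ≤ jap y →
      JJ (-a) x * JJ (-b) y ≤ JJ (-(a + b)) x := by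
    intro a b hb x y h
    rw [neg_add, ← JJ_mul]
    gcongr
    exact ENNReal.ofReal_le_ofReal (Real.rpow_le_rpow_of_nonpos (jap_pos x) h (by linarith))
  rcases le_total (jap x) (jap y) with h | h
  · exact (key a b hb x y h).trans le_self_add
  · rw [mul_comm, add_comm a b]
    exact (key b a ha y x h).trans le_add_self

lemma conv_bound {d : ℕ} {a b : ℝ} (ha : 0 ≤ a) (hb : 0 ≤ b) (h : (d : ℝ) < a + b) :
    ∃ C : ℝ≥0∞, C ≠ ∞ ∧ ∀ y : EuclideanSpace ℝ (Fin d),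
      ∫⁻ z, JJ (-a) (y + z) * JJ (-b) z ≤ C := by
  refine ⟨(∫⁻ x : EuclideanSpace ℝ (Fin d), JJ (-(a + b)) x) +
    ∫⁻ x : EuclideanSpace ℝ (Fin d), JJ (-(a + b)) x, ?_, ?_⟩
  · have := (lintegral_JJ_lt_top h).ne
    exact ENNReal.add_ne_top.2 ⟨this, this⟩
  · intro y
    calc _ ≤ ∫⁻ z, (JJ (-(a + b)) (y + z) + JJ (-(a + b)) z) :=
          lintegral_mono fun z => JJ_mul_le ha hb _ _
      _ = _ := by
          rw [lintegral_add_right _ (by fun_prop), lintegral_add_left_eq_self (JJ (-(a + b)))]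

lemma conv_decay {d : ℕ} {a b c : ℝ} (hc : 0 ≤ c) (hca : c ≤ a) (hcb : c ≤ b)
    (h : (d : ℝ) < a + b - c) :
    ∃ C : ℝ≥0∞, C ≠ ∞ ∧ ∀ y : EuclideanSpace ℝ (Fin d),
      ∫⁻ z, JJ (-a) (y + z) * JJ (-b) z ≤ C * JJ (-c) y := by
  obtain ⟨C1, hC1, H1⟩ := conv_bound (d := d) (a := a - c) (b := b) (by linarith) (by linarith)
    (by linarith)
  obtain ⟨C2, hC2, H2⟩ := conv_bound (d := d) (a := a) (b := b - c) (by linarith) (by linarith)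
    (by linarith)
  refine ⟨ENNReal.ofReal (2 ^ c) * (C1 + C2), by finiteness, ?_⟩
  intro y
  have hpt : ∀ z, JJ (-a) (y + z) * JJ (-b) z ≤ JJ (-c) y * (ENNReal.ofReal (2 ^ c) *
      (JJ (-(a - c)) (y + z) * JJ (-b) z + JJ (-a) (y + z) * JJ (-(b - c)) z)) := by
    intro z
    have h1 : JJ c y ≤ ENNReal.ofReal (2 ^ c) * (JJ c (y + z) + JJ c z) := by
      have := JJ_add_le hc (y + z) (-z)
      rwa [JJ_neg, add_neg_cancel_right] at this
    have h2 : JJ (-c) y * JJ c y = 1 := by rw [JJ_mul, neg_add_cancel, JJ_zero]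
    calc JJ (-a) (y + z) * JJ (-b) z
        = JJ (-c) y * (JJ c y * (JJ (-a) (y + z) * JJ (-b) z)) := by
          rw [← mul_assoc, h2, one_mul]
      _ ≤ JJ (-c) y * ((ENNReal.ofReal (2 ^ c) * (JJ c (y + z) + JJ c z)) *
            (JJ (-a) (y + z) * JJ (-b) z)) := by gcongr
      _ = _ := by
          have e1 : JJ (-(a - c)) (y + z) = JJ c (y + z) * JJ (-a) (y + z) := by
            rw [JJ_mul]; congr 1; ring
          have e2 : JJ (-(b - c)) z = JJ c z * JJ (-b) z := by
            rw [JJ_mul]; congr 1; ring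
          rw [e1, e2]; ring
  calc _ ≤ _ := lintegral_mono hpt
    _ = JJ (-c) y * (ENNReal.ofReal (2 ^ c) * ((∫⁻ z, JJ (-(a - c)) (y + z) * JJ (-b) z) +
        ∫⁻ z, JJ (-a) (y + z) * JJ (-(b - c)) z)) := by
        rw [lintegral_const_mul _ (by fun_prop), lintegral_const_mul _ (by fun_prop),
          lintegral_add_left (by fun_prop)]
    _ ≤ JJ (-c) y * (ENNReal.ofReal (2 ^ c) * (C1 + C2)) := by
        gcongr
        · exact H1 y
        · exact H2 y
    _ = _ := mul_comm _ _

lemma conv_decay' {d : ℕ} {a b c : ℝ} (hc : 0 ≤ c) (hca : c ≤ a) (hcb : c ≤ b)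
    (h : (d : ℝ) < a + b - c) :
    ∃ C : ℝ≥0∞, C ≠ ∞ ∧ ∀ y : EuclideanSpace ℝ (Fin d),
      (∫⁻ z, JJ (-a) (y + z) * JJ (-b) z ≤ C * JJ (-c) y) ∧
      (∫⁻ z, JJ (-a) (y - z) * JJ (-b) z ≤ C * JJ (-c) y) := by
  obtain ⟨C, hC, H⟩ := conv_decay (d := d) hc hca hcb h
  refine ⟨C, hC, fun y => ⟨H y, ?_⟩⟩
  rw [← lintegral_neg_eq_self]
  simpa only [sub_neg_eq_add, JJ_neg] using H y

lemma lintegral_vprod {X Y : Type*} [MeasureSpace X] [MeasureSpace Y]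
    [SFinite (volume : Measure X)] [SFinite (volume : Measure Y)] (f : X × Y → ℝ≥0∞)
    (hf : Measurable f) : ∫⁻ z, f z = ∫⁻ x, ∫⁻ y, f (x, y) := by
  rw [Measure.volume_eq_prod, lintegral_prod _ hf.aemeasurable]

/-- The kernel bound. -/
lemma kernel_bound {d : ℕ} {α : ℝ} (hα : 0 ≤ α) (hα1 : α ≤ 1) (hd : (d : ℝ) < 2 + (1 - α) / 2) :
    ∃ C : ℝ≥0∞, C ≠ ∞ ∧ ∀ p : EuclideanSpace ℝ (Fin d),
      ∫⁻ w : (EuclideanSpace ℝ (Fin d) × EuclideanSpace ℝ (Fin d)) ×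
          EuclideanSpace ℝ (Fin d) × EuclideanSpace ℝ (Fin d),
        JJ (-2) (p - w.1.1 + w.1.2 - w.2.1 + w.2.2) * JJ (-2) w.2.2 * JJ (-2) w.2.1 *
          JJ (-2) w.1.2 * JJ (-2) w.1.1 ≤ C * JJ (-(2 * α)) p := by
  set ε := (1 - α) / 2 with hε
  obtain ⟨C1, hC1, H1⟩ := conv_decay' (d := d) (a := 2) (b := 2) (c := 2 - ε)
    (by linarith) (by linarith) (by linarith) (by linarith)
  obtain ⟨C2, hC2, H2⟩ := conv_decay' (d := d) (a := 2 - ε) (b := 2) (c := 2 - 2 * ε)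
    (by linarith) (by linarith) (by linarith) (by linarith)
  obtain ⟨C3, hC3, H3⟩ := conv_decay' (d := d) (a := 2 - 2 * ε) (b := 2) (c := 2 - 3 * ε)
    (by linarith) (by linarith) (by linarith) (by linarith)
  obtain ⟨C4, hC4, H4⟩ := conv_decay' (d := d) (a := 2 - 3 * ε) (b := 2) (c := 2 * α)
    (by linarith) (by linarith) (by linarith) (by linarith)
  refine ⟨C1 * C2 * C3 * C4, by finiteness, ?_⟩
  intro p
  rw [lintegral_vprod _ (by fun_prop), lintegral_vprod _ (Measurable.lintegral_prod_right (by fun_prop))]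
  have step : ∀ q k : EuclideanSpace ℝ (Fin d),
      ∫⁻ v : EuclideanSpace ℝ (Fin d) × EuclideanSpace ℝ (Fin d),
        JJ (-2) (p - q + k - v.1 + v.2) * JJ (-2) v.2 * JJ (-2) v.1 *
          JJ (-2) k * JJ (-2) q ≤
      C1 * C2 * (JJ (-(2 - 2 * ε)) (p - q + k) * JJ (-2) k * JJ (-2) q) := by
    intro q k
    rw [lintegral_vprod _ (by fun_prop)]
    calc _ = ∫⁻ r, (∫⁻ s, JJ (-2) (p - q + k - r + s) * JJ (-2) s) * (JJ (-2) r *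
          JJ (-2) k * JJ (-2) q) := by
          apply lintegral_congr; intro r
          rw [← lintegral_mul_const _ (by fun_prop)]
          apply lintegral_congr; intro s
          dsimp only; ring
      _ ≤ ∫⁻ r, (C1 * JJ (-(2 - ε)) (p - q + k - r)) * (JJ (-2) r * JJ (-2) k * JJ (-2) q) := by
          gcongr with r
          exact (H1 _).1
      _ = (∫⁻ r, JJ (-(2 - ε)) (p - q + k - r) * JJ (-2) r) *
            (C1 * JJ (-2) k * JJ (-2) q) := by
          rw [← lintegral_mul_const _ (by fun_prop)]
          apply lintegral_congr; intro r
          ring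
      _ ≤ (C2 * JJ (-(2 - 2 * ε)) (p - q + k)) * (C1 * JJ (-2) k * JJ (-2) q) := by
          gcongr
          exact (H2 _).2
      _ = _ := by ring
  calc _ ≤ ∫⁻ q, ∫⁻ k, C1 * C2 * (JJ (-(2 - 2 * ε)) (p - q + k) * JJ (-2) k * JJ (-2) q) := by
        gcongr with q k
        exact step q k
    _ = ∫⁻ q, (∫⁻ k, JJ (-(2 - 2 * ε)) (p - q + k) * JJ (-2) k) * (C1 * C2 * JJ (-2) q) := by
        apply lintegral_congr; intro q
        rw [← lintegral_mul_const _ (by fun_prop)]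
        apply lintegral_congr; intro k
        ring
    _ ≤ ∫⁻ q, (C3 * JJ (-(2 - 3 * ε)) (p - q)) * (C1 * C2 * JJ (-2) q) := by
        gcongr with q
        exact (H3 _).1
    _ = (∫⁻ q, JJ (-(2 - 3 * ε)) (p - q) * JJ (-2) q) * (C1 * C2 * C3) := by
        rw [← lintegral_mul_const _ (by fun_prop)]
        apply lintegral_congr; intro q
        ring
    _ ≤ (C4 * JJ (-(2 * α)) p) * (C1 * C2 * C3) := by
        gcongr
        exact (H4 _).2
    _ = _ := by ring

lemma cs_sq {X : Type*} [MeasurableSpace X] (μ : Measure X) {f g : X → ℝ≥0∞}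
    (hf : AEMeasurable f μ) (hg : AEMeasurable g μ) :
    (∫⁻ x, f x * g x ∂μ) ^ 2 ≤ (∫⁻ x, f x ^ 2 ∂μ) * ∫⁻ x, g x ^ 2 ∂μ := by
  have h := ENNReal.lintegral_mul_le_Lp_mul_Lq μ (p := 2) (q := 2)
    (by constructor <;> norm_num) hf hg
  have h2 : (∫⁻ x, f x * g x ∂μ) ^ 2 ≤ _ := pow_le_pow_left' h 2
  refine h2.trans (le_of_eq ?_)
  rw [mul_pow]
  simp only [← ENNReal.rpow_natCast, ← ENNReal.rpow_mul]
  norm_num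

/-- Minkowski-type inequality for countable sums. -/
lemma minkowski_sq {X : Type*} [MeasurableSpace X] (μ : Measure X) {C : ℝ≥0∞}
    (b : ℕ → X → ℝ≥0∞) (N l : ℕ → ℝ≥0∞) (hb : ∀ j, Measurable (b j))
    (h : ∀ j, ∫⁻ x, b j x ^ 2 ∂μ ≤ C * N j ^ 2) :
    ∫⁻ x, (∑' j, l j * b j x) ^ 2 ∂μ ≤ C * (∑' j, l j * N j) ^ 2 := by
  have hjk : ∀ j k, ∫⁻ x, b j x * b k x ∂μ ≤ C * (N j * N k) := by
    intro j k
    have h1 := (cs_sq μ (hb j).aemeasurable (hb k).aemeasurable).trans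
      (mul_le_mul' (h j) (h k))
    rw [← ENNReal.pow_le_pow_left_iff (n := 2) (by norm_num)]
    refine h1.trans (le_of_eq (by ring))
  have e : ∀ u : ℕ → ℝ≥0∞, (∑' j, u j) ^ 2 = ∑' j, ∑' k, u j * u k := by
    intro u
    simp_rw [ENNReal.tsum_mul_left, ENNReal.tsum_mul_right, sq]
  simp_rw [e]
  rw [lintegral_tsum (fun j => by fun_prop), ← ENNReal.tsum_mul_left]
  refine ENNReal.tsum_le_tsum fun j => ?_
  rw [lintegral_tsum (fun j => by fun_prop), ← ENNReal.tsum_mul_left]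
  refine ENNReal.tsum_le_tsum fun k => ?_
  calc _ = (l j * l k) * ∫⁻ x, b j x * b k x ∂μ := by
        rw [← lintegral_const_mul _ (by fun_prop)]
        apply lintegral_congr; intro x; ring
    _ ≤ (l j * l k) * (C * (N j * N k)) := by gcongr; exact hjk j k
    _ = _ := by ring

lemma big_integral {d : ℕ}
    (H : EuclideanSpace ℝ (Fin d) × EuclideanSpace ℝ (Fin d) × EuclideanSpace ℝ (Fin d) → ℝ≥0∞)
    (hH : Measurable H) :
    ∫⁻ pp : EuclideanSpace ℝ (Fin d) × EuclideanSpace ℝ (Fin d),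
      ∫⁻ w : (EuclideanSpace ℝ (Fin d) × EuclideanSpace ℝ (Fin d)) ×
          EuclideanSpace ℝ (Fin d) × EuclideanSpace ℝ (Fin d),
        H (pp.1 - w.1.1 + w.1.2 - w.2.1 + w.2.2, w.1.1, w.2.1) * H (pp.2, w.1.2, w.2.2)
      = (∫⁻ x, H x) ^ 2 := by
  rw [lintegral_lintegral_swap (by fun_prop)]
  set h : EuclideanSpace ℝ (Fin d) → EuclideanSpace ℝ (Fin d) → ℝ≥0∞ :=
    fun q r => ∫⁻ x, H (x, q, r) with hh
  have hhm : Measurable (Function.uncurry h) := by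
    have : Measurable (fun y : EuclideanSpace ℝ (Fin d) × EuclideanSpace ℝ (Fin d) =>
      ∫⁻ x, H (x, y)) := Measurable.lintegral_prod_left' hH
    exact this
  have hhm2 : Measurable (fun q => ∫⁻ r, h q r) := Measurable.lintegral_prod_right' hhm
  have hN : ∫⁻ x, H x = ∫⁻ q, ∫⁻ r, h q r := by
    rw [Measure.volume_eq_prod, lintegral_prod_symm' _ hH]
    exact lintegral_vprod _ hhm
  have hw : ∀ q k r s : EuclideanSpace ℝ (Fin d),
      ∫⁻ pp : EuclideanSpace ℝ (Fin d) × EuclideanSpace ℝ (Fin d),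
        H (pp.1 - q + k - r + s, q, r) * H (pp.2, k, s) = h q r * h k s := by
    intro q k r s
    rw [Measure.volume_eq_prod, lintegral_prod_mul (f := fun x => H (x - q + k - r + s, q, r))
      (g := fun x => H (x, k, s)) (by fun_prop) (by fun_prop)]
    congr 1
    simp only [hh]
    rw [← lintegral_add_right_eq_self (μ := volume) (fun x => H (x, q, r)) (- q + k - r + s)]
    apply lintegral_congr; intro x
    congr 2
    abel
  simp_rw [hw]
  have m1 : ∀ q, Measurable (h q) := fun q => hhm.of_uncurry_left
  have m2 : Measurable (fun w : (EuclideanSpace ℝ (Fin d) × EuclideanSpace ℝ (Fin d)) ×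
          EuclideanSpace ℝ (Fin d) × EuclideanSpace ℝ (Fin d) =>
          h w.1.1 w.2.1 * h w.1.2 w.2.2) :=
    (hhm.comp (f := fun w : (EuclideanSpace ℝ (Fin d) × EuclideanSpace ℝ (Fin d)) ×
          EuclideanSpace ℝ (Fin d) × EuclideanSpace ℝ (Fin d) => (w.1.1, w.2.1))
          (by fun_prop)).mul
      (hhm.comp (f := fun w : (EuclideanSpace ℝ (Fin d) × EuclideanSpace ℝ (Fin d)) ×
          EuclideanSpace ℝ (Fin d) × EuclideanSpace ℝ (Fin d) => (w.1.2, w.2.2)) (by fun_prop))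
  rw [Measure.volume_eq_prod, lintegral_prod _ m2.aemeasurable]
  have hv : ∀ v : EuclideanSpace ℝ (Fin d) × EuclideanSpace ℝ (Fin d),
      ∫⁻ u : EuclideanSpace ℝ (Fin d) × EuclideanSpace ℝ (Fin d), h v.1 u.1 * h v.2 u.2
      = (∫⁻ r, h v.1 r) * ∫⁻ s, h v.2 s := by
    intro v
    rw [Measure.volume_eq_prod, lintegral_prod_mul (m1 _).aemeasurable (m1 _).aemeasurable]
  simp_rw [hv]
  rw [Measure.volume_eq_prod, lintegral_prod_mul hhm2.aemeasurable hhm2.aemeasurable, hN, sq]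

lemma single_bound {d : ℕ} {α : ℝ} (hα1 : α ≤ 1) {C : ℝ≥0∞}
    (hC : ∀ p : EuclideanSpace ℝ (Fin d),
      ∫⁻ w : (EuclideanSpace ℝ (Fin d) × EuclideanSpace ℝ (Fin d)) ×
          EuclideanSpace ℝ (Fin d) × EuclideanSpace ℝ (Fin d),
        JJ (-2) (p - w.1.1 + w.1.2 - w.2.1 + w.2.2) * JJ (-2) w.2.2 * JJ (-2) w.2.1 *
          JJ (-2) w.1.2 * JJ (-2) w.1.1 ≤ C * JJ (-(2 * α)) p)
    (f : EuclideanSpace ℝ (Fin d) × EuclideanSpace ℝ (Fin d) × EuclideanSpace ℝ (Fin d) → ℝ≥0∞)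
    (hf : Measurable f) :
    ∫⁻ pp : EuclideanSpace ℝ (Fin d) × EuclideanSpace ℝ (Fin d),
      (JJ α pp.1 * JJ α pp.2 *
      ∫⁻ w : (EuclideanSpace ℝ (Fin d) × EuclideanSpace ℝ (Fin d)) ×
          EuclideanSpace ℝ (Fin d) × EuclideanSpace ℝ (Fin d),
        f (pp.1 - w.1.1 + w.1.2 - w.2.1 + w.2.2, w.1.1, w.2.1) * f (pp.2, w.1.2, w.2.2)) ^ 2
      ≤ C * (∫⁻ x, JJ 2 x.1 * JJ 2 x.2.1 * JJ 2 x.2.2 * f x ^ 2) ^ 2 := by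
  have hm : Measurable (fun x : EuclideanSpace ℝ (Fin d) × EuclideanSpace ℝ (Fin d) ×
      EuclideanSpace ℝ (Fin d) => JJ 2 x.1 * JJ 2 x.2.1 * JJ 2 x.2.2 * f x ^ 2) := by fun_prop
  rw [← big_integral _ hm, ← lintegral_const_mul _ (Measurable.lintegral_prod_right (by fun_prop))]
  refine lintegral_mono fun pp => ?_
  obtain ⟨p, p'⟩ := pp
  dsimp only
  have one : ∀ x : EuclideanSpace ℝ (Fin d), JJ (-1) x * JJ 1 x = 1 := by
    intro x; rw [JJ_mul, neg_add_cancel, JJ_zero]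
  have cs := cs_sq volume
    (f := fun w : (EuclideanSpace ℝ (Fin d) × EuclideanSpace ℝ (Fin d)) ×
          EuclideanSpace ℝ (Fin d) × EuclideanSpace ℝ (Fin d) =>
        JJ (-1) (p - w.1.1 + w.1.2 - w.2.1 + w.2.2) * JJ (-1) w.2.2 * JJ (-1) w.2.1 *
          JJ (-1) w.1.2 * JJ (-1) w.1.1)
    (g := fun w => (JJ 1 (p - w.1.1 + w.1.2 - w.2.1 + w.2.2) * JJ 1 w.2.2 * JJ 1 w.2.1 *
          JJ 1 w.1.2 * JJ 1 w.1.1) *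
          (f (p - w.1.1 + w.1.2 - w.2.1 + w.2.2, w.1.1, w.2.1) * f (p', w.1.2, w.2.2)))
    (by fun_prop) (by fun_prop)
  have e1 : ∀ w : (EuclideanSpace ℝ (Fin d) × EuclideanSpace ℝ (Fin d)) ×
          EuclideanSpace ℝ (Fin d) × EuclideanSpace ℝ (Fin d),
      (JJ (-1) (p - w.1.1 + w.1.2 - w.2.1 + w.2.2) * JJ (-1) w.2.2 * JJ (-1) w.2.1 *
          JJ (-1) w.1.2 * JJ (-1) w.1.1) *
      ((JJ 1 (p - w.1.1 + w.1.2 - w.2.1 + w.2.2) * JJ 1 w.2.2 * JJ 1 w.2.1 *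
          JJ 1 w.1.2 * JJ 1 w.1.1) *
          (f (p - w.1.1 + w.1.2 - w.2.1 + w.2.2, w.1.1, w.2.1) * f (p', w.1.2, w.2.2)))
      = f (p - w.1.1 + w.1.2 - w.2.1 + w.2.2, w.1.1, w.2.1) * f (p', w.1.2, w.2.2) := by
    intro w
    calc _ = (JJ (-1) (p - w.1.1 + w.1.2 - w.2.1 + w.2.2) *
          JJ 1 (p - w.1.1 + w.1.2 - w.2.1 + w.2.2)) * (JJ (-1) w.2.2 * JJ 1 w.2.2) *
          (JJ (-1) w.2.1 * JJ 1 w.2.1) * (JJ (-1) w.1.2 * JJ 1 w.1.2) *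
          (JJ (-1) w.1.1 * JJ 1 w.1.1) *
          (f (p - w.1.1 + w.1.2 - w.2.1 + w.2.2, w.1.1, w.2.1) * f (p', w.1.2, w.2.2)) := by ring
      _ = _ := by simp only [one, one_mul]
  simp only [e1, mul_pow, JJ_sq, mul_neg, mul_one] at cs
  rw [mul_pow, mul_pow, JJ_sq, JJ_sq]
  have hone : JJ (2 * α) p * JJ (-(2 * α)) p = 1 := by rw [JJ_mul, add_neg_cancel, JJ_zero]
  set R : ℝ≥0∞ := ∫⁻ x : (EuclideanSpace ℝ (Fin d) × EuclideanSpace ℝ (Fin d)) ×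
        EuclideanSpace ℝ (Fin d) × EuclideanSpace ℝ (Fin d),
        JJ 2 (p - x.1.1 + x.1.2 - x.2.1 + x.2.2) * JJ 2 x.2.2 * JJ 2 x.2.1 * JJ 2 x.1.2 *
          JJ 2 x.1.1 *
          (f (p - x.1.1 + x.1.2 - x.2.1 + x.2.2, x.1.1, x.2.1) ^ 2 *
            f (p', x.1.2, x.2.2) ^ 2) with hR
  calc _ ≤ JJ (2 * α) p * JJ (2 * α) p' * ((C * JJ (-(2 * α)) p) * R) := by
        gcongr
        exact cs.trans (mul_le_mul_left (hC p) _)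
    _ = (JJ (2 * α) p * JJ (-(2 * α)) p) * (C * (JJ (2 * α) p' * R)) := by ring
    _ ≤ C * (JJ 2 p' * R) := by
        rw [hone, one_mul]
        gcongr
        exact JJ_mono (by linarith) _
    _ = _ := by
        congr 1
        rw [hR]
        rw [← lintegral_const_mul _ (by fun_prop)]
        apply lintegral_congr; intro w
        ring

/-- Fourier-space form of the a priori bound
`‖S^{(1,α)} B⁺_{1;2,3} γ^{(3)}‖_{L²} ≤ C · Tr (1−Δ₁)(1−Δ₂)(1−Δ₃) γ^{(3)}`
for a positive trace-class `γ^{(3)} = ∑_j λ_j |ψ_j⟩⟨ψ_j|` with `λ_j ≥ 0`, `∑ λ_j ≤ 1`,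
in dimension `d ∈ {1,2}` with `α ≤ 1` (`d = 1`) resp. `α < 1` (`d = 2`). -/
theorem statement5 (d : ℕ) (hd : d = 1 ∨ d = 2) (α : ℝ) (hα : 0 ≤ α)
    (h1 : d = 1 → α ≤ 1) (h2 : d = 2 → α < 1) :
    ∃ C : ℝ, 0 < C ∧
      ∀ (lam : ℕ → ℝ)
        (ψ : ℕ → EuclideanSpace ℝ (Fin d) × EuclideanSpace ℝ (Fin d) ×
          EuclideanSpace ℝ (Fin d) → ℂ),
        (∀ j, 0 ≤ lam j) → (∑' j, ENNReal.ofReal (lam j)) ≤ 1 → (∀ j, Measurable (ψ j)) →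
        (∫⁻ pp : EuclideanSpace ℝ (Fin d) × EuclideanSpace ℝ (Fin d),
            ENNReal.ofReal (jap pp.1 ^ (2 * α) * jap pp.2 ^ (2 * α)) *
            (∑' j : ℕ, ENNReal.ofReal (lam j) *
              ∫⁻ w : (EuclideanSpace ℝ (Fin d) × EuclideanSpace ℝ (Fin d)) ×
                      EuclideanSpace ℝ (Fin d) × EuclideanSpace ℝ (Fin d),
                ENNReal.ofReal
                  (‖ψ j (pp.1 - w.1.1 + w.1.2 - w.2.1 + w.2.2, w.1.1, w.2.1)‖ *
                    ‖ψ j (pp.2, w.1.2, w.2.2)‖)) ^ 2)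
          ≤ ENNReal.ofReal C *
            (∑' j : ℕ, ENNReal.ofReal (lam j) *
              ∫⁻ x : EuclideanSpace ℝ (Fin d) × EuclideanSpace ℝ (Fin d) ×
                      EuclideanSpace ℝ (Fin d),
                ENNReal.ofReal
                  (jap x.1 ^ 2 * jap x.2.1 ^ 2 * jap x.2.2 ^ 2 * ‖ψ j x‖ ^ 2)) ^ 2 := by
  have hα1 : α ≤ 1 := by
    rcases hd with h | h
    · exact h1 h
    · exact (h2 h).le
  have hdd : (d : ℝ) < 2 + (1 - α) / 2 := by
    rcases hd with h | h
    · have := h1 h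
      subst h
      push_cast
      linarith
    · have := h2 h
      subst h
      push_cast
      linarith
  obtain ⟨C, hCt, hC⟩ := kernel_bound (d := d) hα hα1 hdd
  refine ⟨C.toReal + 1, by positivity, ?_⟩
  intro lam ψ _ _ hψ
  have hCle : C ≤ ENNReal.ofReal (C.toReal + 1) := by
    rw [← ENNReal.ofReal_toReal hCt]
    apply ENNReal.ofReal_le_ofReal
    rw [ENNReal.toReal_ofReal ENNReal.toReal_nonneg]
    linarith
  have hm : ∀ j, Measurable (fun x => ENNReal.ofReal ‖ψ j x‖) := fun j =>
    (hψ j).norm.ennreal_ofReal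
  have key := minkowski_sq volume (C := C)
    (fun j (pp : EuclideanSpace ℝ (Fin d) × EuclideanSpace ℝ (Fin d)) =>
      (JJ α pp.1 * JJ α pp.2 *
      ∫⁻ w : (EuclideanSpace ℝ (Fin d) × EuclideanSpace ℝ (Fin d)) ×
          EuclideanSpace ℝ (Fin d) × EuclideanSpace ℝ (Fin d),
        ENNReal.ofReal ‖ψ j (pp.1 - w.1.1 + w.1.2 - w.2.1 + w.2.2, w.1.1, w.2.1)‖ *
          ENNReal.ofReal ‖ψ j (pp.2, w.1.2, w.2.2)‖))
    (fun j => ∫⁻ x, JJ 2 x.1 * JJ 2 x.2.1 * JJ 2 x.2.2 * ENNReal.ofReal ‖ψ j x‖ ^ 2)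
    (fun j => ENNReal.ofReal (lam j))
    (fun j => by
      refine Measurable.mul (by fun_prop) (Measurable.lintegral_prod_right ?_)
      have := hψ j
      fun_prop)
    (fun j => single_bound hα1 hC _ (hm j))
  refine le_trans (le_of_eq ?_) (key.trans (le_trans (mul_le_mul_left hCle _) (le_of_eq ?_)))
  · apply lintegral_congr
    intro pp
    rw [ENNReal.ofReal_mul (Real.rpow_nonneg (jap_pos _).le _)]
    change JJ (2 * α) pp.1 * JJ (2 * α) pp.2 * _ = _
    rw [← JJ_sq, ← JJ_sq, ← mul_pow, ← mul_pow, ← ENNReal.tsum_mul_left]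
    congr 1
    apply tsum_congr
    intro j
    simp_rw [ENNReal.ofReal_mul (norm_nonneg _)]
    ring
  · congr 2
    apply tsum_congr
    intro j
    congr 1
    apply lintegral_congr
    intro x
    have a1 := jap_pos x.1
    have a2 := jap_pos x.2.1
    have a3 := jap_pos x.2.2
    rw [ENNReal.ofReal_mul (by positivity), ENNReal.ofReal_mul (by positivity),
      ENNReal.ofReal_mul (by positivity), ENNReal.ofReal_pow (norm_nonneg _)]
    simp [JJ]
end

section
/- Let d = 2 and let α be real with 5/6 < α < 1. Then there exists a constant C > 0 such that for every u ∈ ℝ², ∫_{(ℝ²)³} ‖u + q₁ + q₂ − q₁′‖^{-1} ⟨q₁⟩^{-2α} ⟨q₂⟩^{-2α} ⟨q₁′⟩^{-2α} dq₁ dq₂ dq₁′ ≤ C. -/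
open MeasureTheory

lemma aux_pt (x y z t θ : ℝ) (hx : 0 ≤ x) (hy : 0 ≤ y) (hz : 0 ≤ z) (ht : 0 ≤ t)
    (h0 : 0 < θ) (h3 : θ < 1 / 3) :
    x ^ (3 * θ) * (y ^ (1 - θ) * z ^ (1 - θ) * t ^ (1 - θ)) ≤
      y * z * t + x * z * t + x * y * t + x * y * z := by
  have A := Real.geom_mean_le_arith_mean4_weighted (w₁ := 1 - 3 * θ) (w₂ := θ) (w₃ := θ) (w₄ := θ)
    (p₁ := y * z * t) (p₂ := x * z * t) (p₃ := x * y * t) (p₄ := x * y * z)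
    (by linarith) h0.le h0.le h0.le (by positivity) (by positivity) (by positivity)
    (by positivity) (by ring)
  have B : (y * z * t) ^ (1 - 3 * θ) * (x * z * t) ^ θ * (x * y * t) ^ θ * (x * y * z) ^ θ =
      x ^ (3 * θ) * (y ^ (1 - θ) * z ^ (1 - θ) * t ^ (1 - θ)) := by
    have e3 : ∀ v : ℝ, 0 ≤ v → v ^ (3 * θ) = v ^ θ * v ^ θ * v ^ θ := by
      intro v hv
      rw [← Real.rpow_add_of_nonneg hv h0.le h0.le, ← Real.rpow_add_of_nonneg hv (by linarith) h0.le]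
      ring_nf
    have e1 : ∀ v : ℝ, 0 ≤ v → v ^ (1 - θ) = v ^ (1 - 3 * θ) * v ^ θ * v ^ θ := by
      intro v hv
      rw [← Real.rpow_add_of_nonneg hv (by linarith) h0.le,
        ← Real.rpow_add_of_nonneg hv (by linarith) h0.le]
      ring_nf
    rw [e3 x hx, e1 y hy, e1 z hz, e1 t ht]
    simp only [Real.mul_rpow, hx, hy, hz, ht, mul_nonneg]
    ring
  rw [B] at A
  have p1 : 0 ≤ y * z * t := by positivity
  have p2 : 0 ≤ x * z * t := by positivity
  have p3 : 0 ≤ x * y * t := by positivity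
  have p4 : 0 ≤ x * y * z := by positivity
  nlinarith

lemma aux_int (G F : EuclideanSpace ℝ (Fin 2) → ℝ) (hG : Measurable G) (hF : Measurable F)
    (hG0 : ∀ x, 0 ≤ G x) (hF0 : ∀ x, 0 ≤ F x)
    (hGi : Integrable G) (hFi : Integrable F) (θ : ℝ) (h0 : 0 < θ) (h3 : θ < 1 / 3) :
    ∃ C : ENNReal, C ≠ ⊤ ∧ ∀ u : EuclideanSpace ℝ (Fin 2),
      ∫⁻ q : EuclideanSpace ℝ (Fin 2) × EuclideanSpace ℝ (Fin 2) × EuclideanSpace ℝ (Fin 2),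
          ENNReal.ofReal (G (u + q.1 + q.2.1 - q.2.2) ^ (3 * θ) *
            (F q.1 ^ (1 - θ) * F q.2.1 ^ (1 - θ) * F q.2.2 ^ (1 - θ))) ≤ C := by
  set g : EuclideanSpace ℝ (Fin 2) → ENNReal := fun x => ENNReal.ofReal (G x) with hg
  set f : EuclideanSpace ℝ (Fin 2) → ENNReal := fun x => ENNReal.ofReal (F x) with hf
  have mg : Measurable g := hG.ennreal_ofReal
  have mf : Measurable f := hF.ennreal_ofReal
  have fg : ∫⁻ x, g x ≠ ⊤ := hGi.lintegral_lt_top.ne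
  have ff : ∫⁻ x, f x ≠ ⊤ := hFi.lintegral_lt_top.ne
  set I := ∫⁻ x, g x
  set J := ∫⁻ x, f x with hJ
  refine ⟨J * J * J + I * J * J + I * J * J + I * J * J, ?_, ?_⟩
  · simp [ENNReal.add_eq_top, ENNReal.mul_eq_top, fg, ff]
  intro u
  calc _ ≤ ∫⁻ q : EuclideanSpace ℝ (Fin 2) × EuclideanSpace ℝ (Fin 2) × EuclideanSpace ℝ (Fin 2),
        (f q.1 * (f q.2.1 * f q.2.2) + f q.2.1 * (f q.2.2 * g (u + q.1 + q.2.1 - q.2.2))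
          + f q.1 * (f q.2.2 * g (u + q.1 + q.2.1 - q.2.2))
          + f q.1 * (f q.2.1 * g (u + q.1 + q.2.1 - q.2.2))) := by
        apply lintegral_mono
        intro q
        have := aux_pt (G (u + q.1 + q.2.1 - q.2.2)) (F q.1) (F q.2.1) (F q.2.2) θ (hG0 _) (hF0 _)
          (hF0 _) (hF0 _) h0 h3
        refine (ENNReal.ofReal_le_ofReal this).trans ?_
        have n1 := hG0 (u + q.1 + q.2.1 - q.2.2)
        have n2 := hF0 q.1
        have n3 := hF0 q.2.1
        have n4 := hF0 q.2.2
        simp only [hg, hf]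
        rw [ENNReal.ofReal_add (by positivity) (by positivity),
          ENNReal.ofReal_add (by positivity) (by positivity),
          ENNReal.ofReal_add (by positivity) (by positivity)]
        simp only [ENNReal.ofReal_mul, n1, n2, n3, n4, mul_nonneg]
        apply le_of_eq
        ring
    _ = _ := by
        rw [lintegral_add_left (by fun_prop), lintegral_add_left (by fun_prop),
          lintegral_add_left (by fun_prop)]
        congr 1
        congr 1
        congr 1
        · rw [Measure.volume_eq_prod, lintegral_prod _ (by fun_prop)]
          simp only
          simp_rw [Measure.volume_eq_prod]
          simp_rw [lintegral_const_mul (f _) (show Measurable fun y : EuclideanSpace ℝ (Fin 2) × EuclideanSpace ℝ (Fin 2) => f y.1 * f y.2 by fun_prop)]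
          rw [lintegral_mul_const _ mf, lintegral_prod _ (by fun_prop)]
          simp only
          simp_rw [lintegral_const_mul _ mf]
          rw [lintegral_mul_const _ mf, mul_assoc]
        · rw [Measure.volume_eq_prod, lintegral_prod_symm _ (by fun_prop)]
          simp only
          have : ∀ y : EuclideanSpace ℝ (Fin 2) × EuclideanSpace ℝ (Fin 2),
              ∫⁻ x, f y.1 * (f y.2 * g (u + x + y.1 - y.2)) = f y.1 * (f y.2 * I) := by
            intro y
            rw [lintegral_const_mul _ (by fun_prop), lintegral_const_mul _ (by fun_prop)]
            have := lintegral_add_right_eq_self (μ := volume) g (u + y.1 - y.2)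
            simp only [I]
            rw [← this]
            congr 3
            ext x
            congr 1
            abel
          simp_rw [this]
          rw [Measure.volume_eq_prod, lintegral_prod _ (by fun_prop)]
          simp only
          simp_rw [lintegral_const_mul _ (mf.mul_const I), lintegral_mul_const _ mf]
          ring
        · rw [Measure.volume_eq_prod, lintegral_prod _ (by fun_prop)]
          simp only
          simp_rw [Measure.volume_eq_prod]
          have : ∀ x : EuclideanSpace ℝ (Fin 2),
              ∫⁻ y : EuclideanSpace ℝ (Fin 2) × EuclideanSpace ℝ (Fin 2), f x * (f y.2 * g (u + x + y.1 - y.2)) ∂(volume.prod volume) = f x * (J * I) := by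
            intro x
            rw [lintegral_const_mul _ (by fun_prop), lintegral_prod_symm _ (by fun_prop)]
            congr 1
            simp only
            rw [hJ, ← lintegral_mul_const _ mf]
            congr 1
            ext z
            rw [lintegral_const_mul _ (by fun_prop)]
            have := lintegral_add_right_eq_self (μ := volume) g (u + x - z)
            simp only [I]
            rw [← this]
            congr 3
            ext x
            congr 1
            abel
          simp_rw [this]
          rw [lintegral_mul_const _ mf]
          ring
        · rw [Measure.volume_eq_prod, lintegral_prod _ (by fun_prop)]
          simp only
          simp_rw [Measure.volume_eq_prod]
          have : ∀ x : EuclideanSpace ℝ (Fin 2),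
              ∫⁻ y : EuclideanSpace ℝ (Fin 2) × EuclideanSpace ℝ (Fin 2), f x * (f y.1 * g (u + x + y.1 - y.2)) ∂(volume.prod volume) = f x * (J * I) := by
            intro x
            rw [lintegral_const_mul _ (by fun_prop), lintegral_prod _ (by fun_prop)]
            congr 1
            simp only
            rw [hJ, ← lintegral_mul_const _ mf]
            congr 1
            ext z
            rw [lintegral_const_mul _ (by fun_prop)]
            congr 1
            exact lintegral_sub_left_eq_self (μ := volume) g (u + x + z)
          simp_rw [this]
          rw [lintegral_mul_const _ mf]
          ring

lemma aux_jap (r : ℝ) (x : EuclideanSpace ℝ (Fin 2)) : jap x ^ (-r) = (1 + ‖x‖ ^ 2) ^ (-r / 2) := by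
  unfold jap
  rw [← Real.rpow_mul (by positivity)]
  ring_nf

lemma aux_japint (r : ℝ) (hr : 2 < r) :
    Integrable (fun x : EuclideanSpace ℝ (Fin 2) => jap x ^ (-r)) := by
  simp_rw [aux_jap]
  apply integrable_rpow_neg_one_add_norm_sq
  simpa using hr

lemma aux_near : Integrable (fun x : EuclideanSpace ℝ (Fin 2) =>
    (Set.Iic (1:ℝ)).indicator (fun y : ℝ => y ^ (-(4:ℝ)/3)) ‖x‖) := by
  rw [integrable_fun_norm_addHaar volume (f := (Set.Iic (1:ℝ)).indicator (fun y : ℝ => y ^ (-(4:ℝ)/3)))]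
  simp only [finrank_euclideanSpace, Fintype.card_fin, smul_eq_mul]
  have h : IntegrableOn (fun y : ℝ => y ^ (-(1:ℝ)/3)) (Set.Ioc 0 1) := by
    rw [← intervalIntegrable_iff_integrableOn_Ioc_of_le zero_le_one]
    apply intervalIntegral.intervalIntegrable_rpow'
    norm_num
  have h' := h.integrable_indicator measurableSet_Ioc
  refine h'.integrableOn.congr_fun ?_ measurableSet_Ioi
  intro y hy
  have hy : 0 < y := hy
  by_cases h1 : y ≤ 1
  · simp only [Set.indicator, Set.mem_Ioc, Set.mem_Iic, hy, h1, and_self, if_true]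
    norm_num
    rw [← Real.rpow_one_add' hy.le (by norm_num)]
    norm_num
  · simp [Set.indicator, h1]

/-- For `d = 2` and `5/6 < α < 1` there is `C > 0` such that for every `u ∈ ℝ²`,
`∫_{(ℝ²)³} ‖u + q₁ + q₂ − q₁′‖⁻¹ ⟨q₁⟩^{-2α} ⟨q₂⟩^{-2α} ⟨q₁′⟩^{-2α} dq₁ dq₂ dq₁′ ≤ C`. -/
theorem statement7 (α : ℝ) (h1 : 5 / 6 < α) (h2 : α < 1) :
    ∃ C : ℝ, 0 < C ∧ ∀ u : EuclideanSpace ℝ (Fin 2),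
      ∫⁻ q : EuclideanSpace ℝ (Fin 2) × EuclideanSpace ℝ (Fin 2) × EuclideanSpace ℝ (Fin 2),
          ENNReal.ofReal (‖u + q.1 + q.2.1 - q.2.2‖⁻¹ *
            (jap q.1 ^ (-(2 * α)) * jap q.2.1 ^ (-(2 * α)) * jap q.2.2 ^ (-(2 * α))))
        ≤ ENNReal.ofReal C := by
  have jpos : ∀ x : EuclideanSpace ℝ (Fin 2), 0 < jap x := by
    intro x; unfold jap; positivity
  have jm : Measurable (jap : EuclideanSpace ℝ (Fin 2) → ℝ) := by
    unfold jap; fun_prop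
  have key : ∀ θ : ℝ, 1 - α < θ → θ < 1 / 3 → ∀ x : EuclideanSpace ℝ (Fin 2),
      (jap x ^ (-(2 * α / (1 - θ)))) ^ (1 - θ) = jap x ^ (-(2 * α)) := by
    intro θ ha hb x
    rw [← Real.rpow_mul (jpos x).le]
    congr 1
    have : 1 - θ ≠ 0 := by linarith
    field_simp
  have big : ∀ θ : ℝ, 1 - α < θ → θ < 1 / 3 → 2 < 2 * α / (1 - θ) := by
    intro θ ha hb
    rw [lt_div_iff₀ (by linarith)]
    linarith
  obtain ⟨θ, ht1, ht2⟩ : ∃ θ, 1 - α < θ ∧ θ < 1 / 6 := exists_between (by linarith)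
  have ht0 : 0 < θ := by linarith
  obtain ⟨C1, hC1, H1⟩ := aux_int
    (fun x => (Set.Iic (1:ℝ)).indicator (fun y : ℝ => y ^ (-(4:ℝ)/3)) ‖x‖)
    (fun x => jap x ^ (-(2 * α / (1 - 1 / 4))))
    (((by fun_prop : Measurable fun y : ℝ => y ^ (-(4:ℝ)/3)).indicator measurableSet_Iic).comp
      measurable_norm) (by fun_prop)
    (fun x => by
      by_cases h : ‖x‖ ≤ 1
      · simp [Set.indicator, h]; positivity
      · simp [Set.indicator, h])
    (fun x => Real.rpow_nonneg (jpos x).le _) aux_near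
    (aux_japint _ (big _ (by linarith) (by norm_num))) (1 / 4) (by norm_num) (by norm_num)
  obtain ⟨C2, hC2, H2⟩ := aux_int
    (fun x => jap x ^ (-(1 / (3 * θ))))
    (fun x => jap x ^ (-(2 * α / (1 - θ))))
    (by fun_prop) (by fun_prop) (fun x => Real.rpow_nonneg (jpos x).le _)
    (fun x => Real.rpow_nonneg (jpos x).le _)
    (aux_japint _ (by rw [lt_div_iff₀ (by linarith)]; linarith))
    (aux_japint _ (big _ ht1 (by linarith))) θ ht0 (by linarith)
  have hT : C1 + 2 * C2 ≠ ⊤ := by simp [ENNReal.add_eq_top, ENNReal.mul_eq_top, hC1, hC2]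
  refine ⟨(C1 + 2 * C2).toReal + 1, by positivity, fun u => ?_⟩
  have hle : C1 + 2 * C2 ≤ ENNReal.ofReal ((C1 + 2 * C2).toReal + 1) := by
    rw [ENNReal.le_ofReal_iff_toReal_le hT (by positivity)]
    linarith
  refine le_trans ?_ hle
  refine le_trans ?_ (add_le_add (H1 u) (mul_le_mul_right (H2 u) 2))
  simp_rw [key (1 / 4) (by linarith) (by norm_num), key θ ht1 (by linarith)]
  have jm' : Measurable fun q : EuclideanSpace ℝ (Fin 2) × EuclideanSpace ℝ (Fin 2) × EuclideanSpace ℝ (Fin 2) => jap (u + q.1 + q.2.1 - q.2.2) := jm.comp (by fun_prop)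
  rw [← lintegral_const_mul _ (by fun_prop), ← lintegral_add_right _ (by fun_prop)]
  apply lintegral_mono
  intro q
  simp only
  set w := u + q.1 + q.2.1 - q.2.2
  set P := jap q.1 ^ (-(2 * α)) * jap q.2.1 ^ (-(2 * α)) * jap q.2.2 ^ (-(2 * α)) with hP
  have hPn : 0 ≤ P := by
    have := jpos q.1; have := jpos q.2.1; have := jpos q.2.2
    positivity
  by_cases h : ‖w‖ ≤ 1
  · refine le_trans (le_of_eq ?_) le_self_add
    congr 2
    simp only [Set.indicator, Set.mem_Iic, h, if_true]
    rw [← Real.rpow_mul (norm_nonneg _), ← Real.rpow_neg_one]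
    norm_num
  · refine le_trans ?_ le_add_self
    have e2 : ∀ v : ℝ, 2 * ENNReal.ofReal v = ENNReal.ofReal (2 * v) := by
      intro v
      rw [ENNReal.ofReal_mul (by norm_num)]
      simp
    rw [e2, ← mul_assoc 2 _ P]
    apply ENNReal.ofReal_le_ofReal
    apply mul_le_mul_of_nonneg_right _ hPn
    rw [← Real.rpow_mul (jpos w).le, show -(1 / (3 * θ)) * (3 * θ) = -1 by field_simp,
      Real.rpow_neg_one, ← div_eq_mul_inv, ← one_div, div_le_div_iff₀ (by linarith) (jpos w)]
    unfold jap
    rw [← Real.sqrt_eq_rpow, one_mul]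
    apply Real.sqrt_le_iff.2
    constructor <;> nlinarith
end
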